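/- Let λ, t₁, t₂ ∈ ℝ with λ ≠ t₁, λ ≠ −t₂ and t₁ + t₂ ≠ 0. Then lim_{r→0⁺} b(r) · e^{πi b(r)² λ(λ − 2 t₁)} · G_{b(r)}(i b(r)(λ − t₁)) · G_{b(r)}(−i b(r)(λ + t₂)) / G_{b(r)}(−i b(r)(t₁ + t₂)) = (1/2π) · Γ(i(λ − t₁)) Γ(−i(λ + t₂)) / Γ(−i(t₁ + t₂)). (This is the classical limit of the rescaled quantum intertwining kernel b²·𝓕⌊bλ, bt; bt₁, bt₂⌋_* towards the classical ax+b intertwining kernel (1/2π) δ(t₁+t₂−t) Γ(iλ−it₁)Γ(−it₂−iλ)/Γ(−it), with the delta factor removed.) -/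

import Mathlib

open Complex Filter Topology

/-- ζ̄_b = exp(−πi/4 − (πi/12)(b² + b^{−2})). -/
noncomputable def zetaBar (b : ℂ) : ℂ :=
  Complex.exp (-(Real.pi * Complex.I) / 4 - (Real.pi * Complex.I) / 12 * (b ^ 2 + b⁻¹ ^ 2))

/-- The quantum dilogarithm `G_b(x)`, defined for `Im(b²) > 0` by the infinite product
`ζ̄_b · ∏_{n=1}^∞ (1 − e^{2πi b⁻¹(x − n b⁻¹)}) / ∏_{n=0}^∞ (1 − e^{2πi b(x + n b)})`. -/
noncomputable def Gb (b x : ℂ) : ℂ :=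
  zetaBar b *
      (∏' n : ℕ, (1 - Complex.exp (2 * Real.pi * Complex.I * b⁻¹ * (x - (n + 1) * b⁻¹)))) /
    (∏' n : ℕ, (1 - Complex.exp (2 * Real.pi * Complex.I * b * (x + n * b))))

/-- `b(r) = e^{iπ/4} √r`, so that `b(r)² = i r`. -/
noncomputable def br (r : ℝ) : ℂ :=
  Complex.exp (Real.pi * Complex.I / 4) * (Real.sqrt r : ℂ)

/-!
Put `q = e^{2πib²}` and `q̃ = e^{-2πi/b²}`. By the product formula,
`b G_b(zb) G_b(wb) / G_b((z+w)b)` is `b ζ̄_b` times infinite products in `q`, which form the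
`q`-Beta function `B_q(z, w)` up to elementary factors, and infinite products in `q̃`. The modular
transformation of the Dedekind eta function gives `b ζ̄_b = -ib² (q; q)_∞ / (q̃; q̃)_∞`. For
`b = b(r)` and `r → 0⁺` the dual nome `q̃` tends to `0`, so the products in `q̃` tend to `1`,
while `q = e^{-2πr}` tends to `1` from below.

The limit `B_q(z, w) → Γ(z) Γ(w) / Γ(z + w)` is dominated convergence for `1 ≤ Re z, Re w`: up to
an elementary factor, `B_q(z + 1, w + 1)` is the product over `n` of
`1 - q ^ (n+1) [z]_q [w]_q / ([z+n+1]_q [w+n+1]_q)`, and `|[s+n+1]_q| ≥ (n + 1) q ^ (n/2)` for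
`Re s ≥ 0`, so the factors deviate from `1` by `O((n + 1)⁻²)` uniformly in `q`. The recurrence
`B_q(z, w) = [z+w]_q / [z]_q · B_q(z + 1, w)` carries the limit to all other arguments.
-/

section QPochhammer

/-- The `q`-Pochhammer symbol `(a; q)_∞`, meaningful for `‖q‖ < 1`. -/
noncomputable def qPochhammer (a q : ℂ) : ℂ :=
  ∏' n : ℕ, (1 - a * q ^ n)

lemma summable_norm_neg_mul_pow (a : ℂ) {q : ℂ} (hq : ‖q‖ < 1) :
    Summable fun n : ℕ => ‖-(a * q ^ n)‖ := by
  simpa using (summable_geometric_of_lt_one (norm_nonneg q) hq).mul_left ‖a‖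

lemma hasProd_qPochhammer (a : ℂ) {q : ℂ} (hq : ‖q‖ < 1) :
    HasProd (fun n : ℕ => 1 - a * q ^ n) (qPochhammer a q) := by
  have h := multipliable_one_add_of_summable (summable_norm_neg_mul_pow a hq)
  simp only [← sub_eq_add_neg] at h
  exact h.hasProd

lemma one_sub_ne_zero_of_norm_lt_one {a : ℂ} (ha : ‖a‖ < 1) : 1 - a ≠ 0 :=
  (isUnit_one_sub_of_norm_lt_one ha).ne_zero

lemma one_sub_mul_pow_ne_zero {a q : ℂ} (ha : ‖a‖ < 1) (hq : ‖q‖ < 1) (n : ℕ) :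
    1 - a * q ^ n ≠ 0 := by
  refine one_sub_ne_zero_of_norm_lt_one ?_
  rw [norm_mul, norm_pow]
  exact mul_lt_one_of_nonneg_of_lt_one_left (norm_nonneg a) ha
    (pow_le_one₀ (norm_nonneg q) hq.le)

lemma qPochhammer_ne_zero {a q : ℂ} (ha : ‖a‖ < 1) (hq : ‖q‖ < 1) : qPochhammer a q ≠ 0 := by
  simpa only [qPochhammer, sub_eq_add_neg] using tprod_one_add_ne_zero_of_summable
    (fun n => by simpa only [← sub_eq_add_neg] using one_sub_mul_pow_ne_zero ha hq n)
    (summable_norm_neg_mul_pow a hq)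

lemma qPochhammer_eq_one_sub_mul (a : ℂ) {q : ℂ} (hq : ‖q‖ < 1) :
    qPochhammer a q = (1 - a) * qPochhammer (a * q) q := by
  have hterm (n : ℕ) : 1 - a * q * q ^ n = 1 - a * q ^ (n + 1) := by ring
  have h := (hasProd_qPochhammer (a * q) hq).multipliable
  simp only [hterm] at h
  simpa only [qPochhammer, hterm, pow_zero, mul_one] using
    tprod_eq_zero_mul' (f := fun n : ℕ => 1 - a * q ^ n) h

/-- The ratio `(q; q)_∞ (abq; q)_∞ / ((aq; q)_∞ (bq; q)_∞)`, which gives the `q`-Beta function at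
`a = q ^ z`, `b = q ^ w` up to finitely many factors. -/
noncomputable def qPochhammerRatio (a b q : ℂ) : ℂ :=
  qPochhammer q q * qPochhammer (a * b * q) q /
    (qPochhammer (a * q) q * qPochhammer (b * q) q)

lemma qPochhammerRatio_eq_tprod {a b q : ℂ} (ha : ‖a * q‖ < 1) (hb : ‖b * q‖ < 1)
    (hq : ‖q‖ < 1) :
    qPochhammerRatio a b q = ∏' n : ℕ, (1 - q ^ (n + 1) * (1 - a) * (1 - b) /
      ((1 - a * q ^ (n + 1)) * (1 - b * q ^ (n + 1)))) := by
  have hnum := (hasProd_qPochhammer q hq).mul (hasProd_qPochhammer (a * b * q) hq)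
  have hden := (hasProd_qPochhammer (a * q) hq).mul (hasProd_qPochhammer (b * q) hq)
  rw [qPochhammerRatio, ← (hnum.div₀ hden
    (mul_ne_zero (qPochhammer_ne_zero ha hq) (qPochhammer_ne_zero hb hq))).tprod_eq]
  refine tprod_congr fun n => ?_
  have hterm (c : ℂ) : c * q * q ^ n = c * q ^ (n + 1) := by ring
  have hne := mul_ne_zero (one_sub_mul_pow_ne_zero ha hq n) (one_sub_mul_pow_ne_zero hb hq n)
  rw [hterm, hterm] at hne
  rw [hterm, hterm, hterm, ← pow_succ', one_sub_div hne]
  ring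

lemma tendsto_qPochhammer_of_tendsto_zero {α : Type*} {f : Filter α} {a q : α → ℂ}
    (ha : Tendsto a f (𝓝 0)) (hq : Tendsto q f (𝓝 0)) :
    Tendsto (fun x => qPochhammer (a x) (q x)) f (𝓝 1) := by
  have h := tendsto_tprod_one_add_of_dominated_convergence (𝓕 := f) (g := fun _ : ℕ => 0)
    (f := fun x n => -(a x * q x ^ n)) summable_geometric_two
    (fun n => by simpa using (ha.mul (hq.pow n)).neg) ?_
  · simpa only [qPochhammer, sub_eq_add_neg, add_zero, tprod_one] using h
  · filter_upwards [ha.norm.eventually_le_const (by simp : ‖(0 : ℂ)‖ < 1),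
      hq.norm.eventually_le_const (by simp : ‖(0 : ℂ)‖ < 1 / 2)] with x hax hqx n
    rw [norm_neg, norm_mul, norm_pow]
    calc ‖a x‖ * ‖q x‖ ^ n ≤ 1 * (1 / 2) ^ n := by gcongr
      _ = (1 / 2) ^ n := one_mul _

lemma tendsto_qPochhammerRatio_nhds_zero (a b : ℂ) :
    Tendsto (qPochhammerRatio a b) (𝓝 0) (𝓝 1) := by
  have h (c : ℂ) : Tendsto (fun q => qPochhammer (c * q) q) (𝓝 0) (𝓝 1) :=
    tendsto_qPochhammer_of_tendsto_zero (by simpa using (continuous_const_mul c).tendsto 0)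
      tendsto_id
  have hlim := ((h 1).mul (h (a * b))).div ((h a).mul (h b)) (by simp)
  rw [one_mul, div_one] at hlim
  exact hlim.congr fun q => by simp only [Pi.div_apply, one_mul, qPochhammerRatio]

end QPochhammer

section QNumber

/-- The `q`-number `[s]_q = (1 - q ^ s) / (1 - q)`, a deformation of `s` recovered as `q → 1`. The
power is principal and the intended range is `0 < q < 1`. -/
noncomputable def qNumber (q s : ℂ) : ℂ :=
  (1 - q ^ s) / (1 - q)

lemma tendsto_qNumber (s : ℂ) : Tendsto (fun q : ℝ => qNumber q s) (𝓝[<] 1) (𝓝 s) := by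
  have hderiv : HasDerivAt (fun q : ℝ => (q : ℂ) ^ s) s 1 := by
    have h : HasDerivAt (fun q : ℂ => q ^ s) s ((1 : ℝ) : ℂ) := by
      simpa using (hasDerivAt_id (1 : ℂ)).cpow_const (c := s) (by simp)
    exact h.comp_ofReal
  refine ((hasDerivAt_iff_tendsto_slope.1 hderiv).mono_left
    (nhdsWithin_mono _ fun q (hq : q < 1) => hq.ne)).congr fun q => ?_
  rw [slope_def_module, qNumber, ← neg_div_neg_eq, neg_sub, neg_sub, div_eq_inv_mul]
  simp

lemma succ_mul_pow_le_sum_sq_pow {s : ℝ} (hs : 0 ≤ s) (n : ℕ) :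
    (n + 1) * s ^ n ≤ ∑ k ∈ Finset.range (n + 1), (s ^ 2) ^ k := by
  induction n with
  | zero => simp
  | succ n ih =>
    have bernoulli := one_add_mul_sub_le_pow (by linarith : -1 ≤ s) (n + 2)
    rw [Finset.sum_range_succ]
    calc ((n + 1 : ℕ) + 1) * s ^ (n + 1)
        = (n + 1) * s ^ n + s ^ n * (1 + (n + 2 : ℕ) * (s - 1)) := by push_cast; ring
      _ ≤ (n + 1) * s ^ n + s ^ n * s ^ (n + 2) := by gcongr
      _ = (n + 1) * s ^ n + (s ^ 2) ^ (n + 1) := by ring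
      _ ≤ _ := by gcongr

lemma succ_mul_sqrt_pow_le_norm_qNumber {q : ℝ} (hq0 : 0 < q) (hq1 : q < 1) {s : ℂ} {n : ℕ}
    (hs : n + 1 ≤ s.re) : (n + 1) * √q ^ n ≤ ‖qNumber q s‖ := by
  have hnum : 1 - q ^ (n + 1) ≤ ‖1 - (q : ℂ) ^ s‖ := by
    have hpow : ‖(q : ℂ) ^ s‖ ≤ q ^ (n + 1) := by
      rw [norm_cpow_eq_rpow_re_of_pos hq0, ← Real.rpow_natCast]
      exact Real.rpow_le_rpow_of_exponent_ge hq0 hq1.le (mod_cast hs)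
    have htri := norm_sub_norm_le 1 ((q : ℂ) ^ s)
    rw [norm_one] at htri
    linarith
  have hden : ‖1 - (q : ℂ)‖ = 1 - q := by
    rw [← ofReal_one, ← ofReal_sub, norm_real, Real.norm_of_nonneg (sub_nonneg.2 hq1.le)]
  calc (n + 1) * √q ^ n ≤ ∑ k ∈ Finset.range (n + 1), q ^ k := by
        simpa only [Real.sq_sqrt hq0.le] using succ_mul_pow_le_sum_sq_pow (Real.sqrt_nonneg q) n
    _ = (1 - q ^ (n + 1)) / (1 - q) := by
        rw [geom_sum_eq hq1.ne, ← neg_sub 1, ← neg_sub 1 q, neg_div_neg_eq]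
    _ ≤ ‖qNumber q s‖ := by
        rw [qNumber, norm_div, hden]
        exact div_le_div_of_nonneg_right hnum (sub_nonneg.2 hq1.le)

end QNumber

section Gamma

lemma natCast_succ_le_norm_add {z : ℂ} (hz : 0 ≤ z.re) (n : ℕ) :
    (n + 1 : ℝ) ≤ ‖z + (n + 1)‖ := by
  refine le_trans ?_ (re_le_norm _)
  simpa using hz

lemma add_natCast_succ_ne_zero {z : ℂ} (hz : 0 ≤ z.re) (n : ℕ) : z + (n + 1) ≠ 0 :=
  norm_pos_iff.1 (n.cast_add_one_pos.trans_le (natCast_succ_le_norm_add hz n))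

lemma summable_const_div_succ_sq (c : ℝ) : Summable fun n : ℕ => c / (n + 1 : ℝ) ^ 2 := by
  have h := (summable_nat_add_iff 1).2 (Real.summable_one_div_nat_pow.2 one_lt_two)
  simpa [div_eq_mul_inv] using h.mul_left c

lemma multipliable_one_sub_mul_div {z w : ℂ} (hz : 0 ≤ z.re) (hw : 0 ≤ w.re) :
    Multipliable fun n : ℕ => 1 - z * w / ((z + (n + 1)) * (w + (n + 1))) := by
  simp only [sub_eq_add_neg]
  refine multipliable_one_add_of_summable ((summable_const_div_succ_sq ‖z * w‖).of_nonneg_of_le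
    (fun _ => norm_nonneg _) fun n => ?_)
  rw [norm_neg, norm_div, norm_mul (z + _), sq]
  gcongr
  · exact natCast_succ_le_norm_add hz n
  · exact natCast_succ_le_norm_add hw n

lemma GammaSeq_add_one_mul_div {z w : ℂ} (hz : 0 ≤ z.re) (hw : 0 ≤ w.re) {n : ℕ} (hn : n ≠ 0) :
    GammaSeq (z + 1) n * GammaSeq (w + 1) n / GammaSeq (z + w + 1) n =
      n / (n + 1) *
        ∏ j ∈ Finset.range (n + 1), (1 - z * w / ((z + (j + 1)) * (w + (j + 1)))) := by
  have hn0 : (n : ℂ) ≠ 0 := Nat.cast_ne_zero.2 hn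
  have hprod {v : ℂ} (hv : 0 ≤ v.re) : ∏ j ∈ Finset.range (n + 1), (v + (j + 1)) ≠ 0 :=
    Finset.prod_ne_zero_iff.2 fun j _ => add_natCast_succ_ne_zero hv j
  have hseq (v : ℂ) : GammaSeq (v + 1) n =
      (n : ℂ) ^ v * n * n.factorial / ∏ j ∈ Finset.range (n + 1), (v + (j + 1)) := by
    simp only [GammaSeq, cpow_add _ _ hn0, cpow_one, add_assoc, add_comm (1 : ℂ)]
  have hterm (j : ℕ) : 1 - z * w / ((z + (j + 1)) * (w + (j + 1))) =
      (j + 1 : ℕ) * (z + w + (j + 1)) / ((z + (j + 1)) * (w + (j + 1))) := by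
    have hzj := add_natCast_succ_ne_zero hz j
    have hwj := add_natCast_succ_ne_zero hw j
    field_simp
    push_cast
    ring
  have hfac : ∏ j ∈ Finset.range (n + 1), ((j + 1 : ℕ) : ℂ) = (n + 1) * n.factorial := by
    rw [← Nat.cast_prod, Finset.prod_range_add_one_eq_factorial, Nat.factorial_succ]
    push_cast
    rfl
  have hzn := hprod hz
  have hwn := hprod hw
  have hzwn : ∏ j ∈ Finset.range (n + 1), (z + w + (j + 1)) ≠ 0 :=
    hprod (by simpa using add_nonneg hz hw)
  have hfac0 : (n.factorial : ℂ) ≠ 0 := Nat.cast_ne_zero.2 n.factorial_ne_zero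
  have hn1 : (n + 1 : ℂ) ≠ 0 := n.cast_add_one_ne_zero
  have hzpow : (n : ℂ) ^ z ≠ 0 := by simp [cpow_eq_zero_iff, hn0]
  have hwpow : (n : ℂ) ^ w ≠ 0 := by simp [cpow_eq_zero_iff, hn0]
  simp only [hseq, hterm, Finset.prod_div_distrib, Finset.prod_mul_distrib, hfac,
    cpow_add _ _ hn0]
  field_simp

lemma tprod_one_sub_mul_div_eq_Gamma {z w : ℂ} (hz : 0 ≤ z.re) (hw : 0 ≤ w.re) :
    ∏' n : ℕ, (1 - z * w / ((z + (n + 1)) * (w + (n + 1)))) =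
      Gamma (z + 1) * Gamma (w + 1) / Gamma (z + w + 1) := by
  have hGamma : Gamma (z + w + 1) ≠ 0 := Gamma_ne_zero_of_re_pos (by
    simpa using add_pos_of_nonneg_of_pos (add_nonneg hz hw) one_pos)
  have hpartial : Tendsto (fun n : ℕ => (n : ℂ) / (n + 1) *
      ∏ j ∈ Finset.range (n + 1), (1 - z * w / ((z + (j + 1)) * (w + (j + 1))))) atTop
      (𝓝 (1 * ∏' n : ℕ, (1 - z * w / ((z + (n + 1)) * (w + (n + 1)))))) :=
    (tendsto_natCast_div_add_atTop 1).mul <| (tendsto_add_atTop_iff_nat 1).2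
      (multipliable_one_sub_mul_div hz hw).hasProd.tendsto_prod_nat
  rw [one_mul] at hpartial
  refine tendsto_nhds_unique hpartial ((((GammaSeq_tendsto_Gamma (z + 1)).mul
    (GammaSeq_tendsto_Gamma (w + 1))).div (GammaSeq_tendsto_Gamma (z + w + 1)) hGamma).congr' ?_)
  filter_upwards [eventually_ne_atTop 0] with n hn using GammaSeq_add_one_mul_div hz hw hn

end Gamma

section QBeta

/-- The `q`-Beta function `B_q(z, w) = (1 - q) (q; q)_∞ (q^{z+w}; q)_∞ / ((q^z; q)_∞ (q^w; q)_∞)`,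
a deformation of `Γ(z) Γ(w) / Γ(z + w)` recovered as `q → 1`. The powers are principal and the
intended range is `0 < q < 1`. -/
noncomputable def qBeta (q z w : ℂ) : ℂ :=
  (1 - q) * (qPochhammer q q * qPochhammer (q ^ (z + w)) q) /
    (qPochhammer (q ^ z) q * qPochhammer (q ^ w) q)

lemma qBeta_comm (q z w : ℂ) : qBeta q z w = qBeta q w z := by
  rw [qBeta, qBeta, add_comm z w, mul_comm (qPochhammer (q ^ z) q)]

lemma qBeta_eq_mul_qBeta_add_one {q : ℂ} (hq0 : q ≠ 0) (hq1 : ‖q‖ < 1) (z w : ℂ) :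
    qBeta q z w = qNumber q (z + w) / qNumber q z * qBeta q (z + 1) w := by
  have hsub : 1 - q ≠ 0 := one_sub_ne_zero_of_norm_lt_one hq1
  have hstep (s : ℂ) :
      qPochhammer (q ^ s) q = (1 - q) * qNumber q s * qPochhammer (q ^ (s + 1)) q := by
    rw [qPochhammer_eq_one_sub_mul _ hq1, cpow_add _ _ hq0, cpow_one, qNumber,
      mul_div_cancel₀ _ hsub]
  rw [qBeta, qBeta, hstep (z + w), hstep z, add_right_comm z 1 w]
  field_simp

lemma pow_mul_qNumber_mul_qNumber_div {q : ℂ} (hq0 : q ≠ 0) (hq1 : q ≠ 1) (z w : ℂ) (n : ℕ) :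
    q ^ (n + 1) * qNumber q z * qNumber q w /
        (qNumber q (z + (n + 1)) * qNumber q (w + (n + 1))) =
      q ^ (n + 1) * (1 - q ^ z) * (1 - q ^ w) /
        ((1 - q ^ z * q ^ (n + 1)) * (1 - q ^ w * q ^ (n + 1))) := by
  have hpow (s : ℂ) : q ^ (s + (n + 1)) = q ^ s * q ^ (n + 1) := by
    rw [cpow_add _ _ hq0]
    norm_cast
  have hsub : 1 - q ≠ 0 := sub_ne_zero.2 hq1.symm
  simp only [qNumber, hpow]
  field_simp

lemma qBeta_add_one_add_one {q : ℝ} (hq0 : 0 < q) (hq1 : q < 1) {z w : ℂ} (hz : 0 ≤ z.re)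
    (hw : 0 ≤ w.re) :
    qBeta q (z + 1) (w + 1) = (qNumber q (z + w + 1))⁻¹ *
      ∏' n : ℕ, (1 - (q : ℂ) ^ (n + 1) * qNumber q z * qNumber q w /
        (qNumber q (z + (n + 1)) * qNumber q (w + (n + 1)))) := by
  have hqC : (q : ℂ) ≠ 0 := ofReal_ne_zero.2 hq0.ne'
  have hqn : ‖(q : ℂ)‖ < 1 := by rwa [norm_real, Real.norm_of_nonneg hq0.le]
  have hsub : (1 - q : ℂ) ≠ 0 := one_sub_ne_zero_of_norm_lt_one hqn
  have hnorm {s : ℂ} (hs : 0 ≤ s.re) : ‖(q : ℂ) ^ (s + 1)‖ < 1 := by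
    rw [norm_cpow_eq_rpow_re_of_pos hq0]
    exact Real.rpow_lt_one hq0.le hq1 (by simpa using add_pos_of_nonneg_of_pos hs one_pos)
  have hzw : 1 - (q : ℂ) ^ (z + w + 1) ≠ 0 :=
    one_sub_ne_zero_of_norm_lt_one (hnorm (by simpa using add_nonneg hz hw))
  have hadd (s : ℂ) : (q : ℂ) ^ (s + 1) = (q : ℂ) ^ s * q := by rw [cpow_add _ _ hqC, cpow_one]
  have hfactor : qPochhammer ((q : ℂ) ^ (z + w + 1)) q =
      (1 - (q : ℂ) ^ (z + w + 1)) * qPochhammer ((q : ℂ) ^ (z + 1 + (w + 1))) q := by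
    rw [qPochhammer_eq_one_sub_mul _ hqn, ← hadd]
    ring_nf
  have hratio := qPochhammerRatio_eq_tprod (hadd z ▸ hnorm hz) (hadd w ▸ hnorm hw) hqn
  rw [qPochhammerRatio, ← cpow_add _ _ hqC, ← hadd, ← hadd, ← hadd, hfactor] at hratio
  simp only [pow_mul_qNumber_mul_qNumber_div hqC (ofReal_ne_one.2 hq1.ne)]
  rw [← hratio, qBeta, qNumber]
  field_simp

lemma tendsto_tprod_qNumber {z w : ℂ} (hz : 0 ≤ z.re) (hw : 0 ≤ w.re) :
    Tendsto (fun q : ℝ => ∏' n : ℕ, (1 - (q : ℂ) ^ (n + 1) * qNumber q z * qNumber q w /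
        (qNumber q (z + (n + 1)) * qNumber q (w + (n + 1))))) (𝓝[<] 1)
      (𝓝 (∏' n : ℕ, (1 - z * w / ((z + (n + 1)) * (w + (n + 1)))))) := by
  simp only [sub_eq_add_neg]
  refine tendsto_tprod_one_add_of_dominated_convergence
    (summable_const_div_succ_sq ((‖z‖ + 1) * (‖w‖ + 1))) (fun n => ?_) ?_
  · have hpow : Tendsto (fun q : ℝ => (q : ℂ) ^ (n + 1)) (𝓝[<] 1) (𝓝 1) := by
      have h : Continuous fun q : ℝ => (q : ℂ) ^ (n + 1) := by fun_prop
      simpa using (h.tendsto 1).mono_left nhdsWithin_le_nhds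
    have hnum := (hpow.mul (tendsto_qNumber z)).mul (tendsto_qNumber w)
    simpa only [Pi.div_apply, one_mul] using (hnum.div
      ((tendsto_qNumber (z + (n + 1))).mul (tendsto_qNumber (w + (n + 1))))
      (mul_ne_zero (add_natCast_succ_ne_zero hz n) (add_natCast_succ_ne_zero hw n))).neg
  · filter_upwards [Ioo_mem_nhdsLT one_pos,
      (tendsto_qNumber z).norm.eventually_le_const (lt_add_one _),
      (tendsto_qNumber w).norm.eventually_le_const (lt_add_one _)] with q ⟨hq0, hq1⟩ hzq hwq n
    have hlower {s : ℂ} (hs : 0 ≤ s.re) : (n + 1) * √q ^ n ≤ ‖qNumber q (s + (n + 1))‖ :=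
      succ_mul_sqrt_pow_le_norm_qNumber hq0 hq1 (by simpa using hs)
    rw [norm_neg, norm_div, norm_mul, norm_mul, norm_mul (qNumber _ (z + _)), norm_pow, norm_real,
      Real.norm_of_nonneg hq0.le]
    calc _ ≤ q ^ n * (‖z‖ + 1) * (‖w‖ + 1) / (((n + 1) * √q ^ n) * ((n + 1) * √q ^ n)) := by
          gcongr ?_ * ?_ * ?_ / (?_ * ?_)
          · exact pow_le_pow_of_le_one hq0.le hq1.le n.le_succ
          · exact hlower hz
          · exact hlower hw
      _ = (‖z‖ + 1) * (‖w‖ + 1) / (n + 1) ^ 2 := by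
          rw [mul_mul_mul_comm, ← mul_pow, Real.mul_self_sqrt hq0.le]
          field_simp

lemma tendsto_qBeta_of_one_le_re {z w : ℂ} (hz : 1 ≤ z.re) (hw : 1 ≤ w.re) :
    Tendsto (fun q : ℝ => qBeta q z w) (𝓝[<] 1) (𝓝 (Gamma z * Gamma w / Gamma (z + w))) := by
  obtain ⟨z, rfl⟩ : ∃ s, z = s + 1 := ⟨z - 1, by ring⟩
  obtain ⟨w, rfl⟩ : ∃ s, w = s + 1 := ⟨w - 1, by ring⟩
  replace hz : 0 ≤ z.re := by simpa using hz
  replace hw : 0 ≤ w.re := by simpa using hw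
  have hzw : z + w + 1 ≠ 0 := by
    simpa using add_natCast_succ_ne_zero (z := z + w) (by simpa using add_nonneg hz hw) 0
  have hlim := ((tendsto_qNumber (z + w + 1)).inv₀ hzw).mul (tendsto_tprod_qNumber hz hw)
  rw [tprod_one_sub_mul_div_eq_Gamma hz hw] at hlim
  have hlimit : (z + w + 1)⁻¹ * (Gamma (z + 1) * Gamma (w + 1) / Gamma (z + w + 1)) =
      Gamma (z + 1) * Gamma (w + 1) / Gamma (z + 1 + (w + 1)) := by
    rw [show z + 1 + (w + 1) = z + w + 1 + 1 by ring, Gamma_add_one _ hzw]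
    field_simp
  rw [hlimit] at hlim
  refine hlim.congr' ?_
  filter_upwards [Ioo_mem_nhdsLT one_pos] with q ⟨hq0, hq1⟩
  exact (qBeta_add_one_add_one hq0 hq1 hz hw).symm

lemma tendsto_qBeta_of_add_one {z w : ℂ} (hz : z ≠ 0) (hzw : z + w ≠ 0)
    (h : Tendsto (fun q : ℝ => qBeta q (z + 1) w) (𝓝[<] 1)
      (𝓝 (Gamma (z + 1) * Gamma w / Gamma (z + 1 + w)))) :
    Tendsto (fun q : ℝ => qBeta q z w) (𝓝[<] 1) (𝓝 (Gamma z * Gamma w / Gamma (z + w))) := by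
  have hlim := ((tendsto_qNumber (z + w)).div (tendsto_qNumber z) hz).mul h
  have hlimit : (z + w) / z * (Gamma (z + 1) * Gamma w / Gamma (z + 1 + w)) =
      Gamma z * Gamma w / Gamma (z + w) := by
    rw [add_right_comm, Gamma_add_one _ hz, Gamma_add_one _ hzw]
    field_simp
  rw [hlimit] at hlim
  refine hlim.congr' ?_
  filter_upwards [Ioo_mem_nhdsLT one_pos] with q ⟨hq0, hq1⟩
  exact (qBeta_eq_mul_qBeta_add_one (ofReal_ne_zero.2 hq0.ne')
    (by rwa [norm_real, Real.norm_of_nonneg hq0.le]) z w).symm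

lemma tendsto_qBeta_of_add_natCast {z w : ℂ} (hz : ∀ n : ℕ, z ≠ -n) (hzw : ∀ n : ℕ, z + w ≠ -n)
    (N : ℕ) (h : Tendsto (fun q : ℝ => qBeta q (z + N) w) (𝓝[<] 1)
      (𝓝 (Gamma (z + N) * Gamma w / Gamma (z + N + w)))) :
    Tendsto (fun q : ℝ => qBeta q z w) (𝓝[<] 1) (𝓝 (Gamma z * Gamma w / Gamma (z + w))) := by
  induction N with
  | zero => simpa using h
  | succ N ih =>
    refine ih (tendsto_qBeta_of_add_one ?_ ?_ (by simpa [add_assoc] using h))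
    · exact fun h0 => hz N (eq_neg_of_add_eq_zero_left h0)
    · exact fun h0 => hzw N (eq_neg_of_add_eq_zero_left (by rwa [add_right_comm]))

theorem tendsto_qBeta {z w : ℂ} (hz : ∀ n : ℕ, z ≠ -n) (hw : ∀ n : ℕ, w ≠ -n)
    (hzw : ∀ n : ℕ, z + w ≠ -n) :
    Tendsto (fun q : ℝ => qBeta q z w) (𝓝[<] 1) (𝓝 (Gamma z * Gamma w / Gamma (z + w))) := by
  obtain ⟨M, hM⟩ := exists_nat_ge (1 - z.re)
  obtain ⟨N, hN⟩ := exists_nat_ge (1 - w.re)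
  refine tendsto_qBeta_of_add_natCast hz hzw M ?_
  simp only [qBeta_comm _ (z + M), mul_comm (Gamma (z + M)), add_comm (z + M)]
  refine tendsto_qBeta_of_add_natCast hw (fun n h => hzw (n + M) ?_) N
    (tendsto_qBeta_of_one_le_re ?_ ?_)
  · push_cast
    linear_combination h
  · simpa using sub_le_iff_le_add'.1 hN
  · simpa using sub_le_iff_le_add'.1 hM

end QBeta

section QuantumDilogarithm

open scoped Real
open Function.Periodic (qParam)

lemma Gb_mul_self {b : ℂ} (hb : b ≠ 0) (z : ℂ) :
    Gb b (z * b) = zetaBar b *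
      qPochhammer (qParam 1 z * qParam 1 (-1 / b ^ 2)) (qParam 1 (-1 / b ^ 2)) /
      qPochhammer (qParam 1 (b ^ 2 * z)) (qParam 1 (b ^ 2)) := by
  have hnum (n : ℕ) : exp (2 * π * I * b⁻¹ * (z * b - (n + 1) * b⁻¹)) =
      qParam 1 z * qParam 1 (-1 / b ^ 2) * qParam 1 (-1 / b ^ 2) ^ n := by
    simp only [qParam, ← Complex.exp_nat_mul, ← Complex.exp_add, ofReal_one, div_one]
    congr 1
    field_simp
    ring
  have hden (n : ℕ) : exp (2 * π * I * b * (z * b + n * b)) =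
      qParam 1 (b ^ 2 * z) * qParam 1 (b ^ 2) ^ n := by
    simp only [qParam, ← Complex.exp_nat_mul, ← Complex.exp_add, ofReal_one, div_one]
    ring_nf
  simp only [Gb, qPochhammer, hnum, hden]

lemma eta_eq_qParam_mul_qPochhammer (τ : ℂ) :
    ModularForm.eta τ = qParam 24 τ * qPochhammer (qParam 1 τ) (qParam 1 τ) := by
  simp only [ModularForm.eta, ModularForm.eta_q, qPochhammer, pow_succ']

lemma sqrt_sq_of_re_pos {b : ℂ} (hb : 0 < b.re) : Complex.sqrt (b ^ 2) = b := by
  have harg := abs_lt.1 (abs_arg_lt_pi_div_two_iff.2 (.inl hb))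
  rw [Complex.sqrt]
  exact_mod_cast pow_cpow_nat_inv two_ne_zero (by linarith [harg.1]) (by linarith [harg.2])

lemma zetaBar_mul_qPochhammer {b : ℂ} (hb : 0 < b.re) (hb2 : 0 < (b ^ 2).im) :
    zetaBar b * qPochhammer (qParam 1 (-1 / b ^ 2)) (qParam 1 (-1 / b ^ 2)) =
      -I * b * qPochhammer (qParam 1 (b ^ 2)) (qParam 1 (b ^ 2)) := by
  have heta := ModularForm.eta_comp_eq_csqrt_I_inv hb2
  have hsqrtI : (Complex.sqrt I)⁻¹ = exp (-(π * I) / 4) := by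
    rw [sqrt_eq_exp I_ne_zero, log_I, ← Complex.exp_neg]
    ring_nf
  simp only [Function.comp_apply, Pi.smul_apply, Pi.mul_apply, smul_eq_mul,
    eta_eq_qParam_mul_qPochhammer, sqrt_sq_of_re_pos hb, hsqrtI] at heta
  have hzeta : zetaBar b =
      exp (-(π * I) / 4) * (qParam 24 (b ^ 2))⁻¹ * qParam 24 (-1 / b ^ 2) := by
    simp only [zetaBar, qParam, ← Complex.exp_neg, ← Complex.exp_add]
    congr 1
    push_cast
    ring
  have hI : exp (-(π * I) / 4) * exp (-(π * I) / 4) = -I := by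
    rw [← Complex.exp_add, ← exp_neg_pi_div_two_mul_I]
    ring_nf
  have hq : qParam 24 (b ^ 2) ≠ 0 := Complex.exp_ne_zero _
  rw [hzeta, mul_assoc, heta, ← hI]
  field_simp

lemma mul_Gb_mul_Gb_div_Gb {b : ℂ} (hb : 0 < b.re) (hb2 : 0 < (b ^ 2).im) (z w : ℂ) :
    b * Gb b (z * b) * Gb b (w * b) / Gb b ((z + w) * b) =
      -I * b ^ 2 *
        (qPochhammer (qParam 1 (b ^ 2)) (qParam 1 (b ^ 2)) *
            qPochhammer (qParam 1 (b ^ 2 * (z + w))) (qParam 1 (b ^ 2)) /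
          (qPochhammer (qParam 1 (b ^ 2 * z)) (qParam 1 (b ^ 2)) *
            qPochhammer (qParam 1 (b ^ 2 * w)) (qParam 1 (b ^ 2)))) /
        qPochhammerRatio (qParam 1 z) (qParam 1 w) (qParam 1 (-1 / b ^ 2)) := by
  have hb0 : b ≠ 0 := ne_of_apply_ne re hb.ne'
  have hdual : ‖qParam 1 (-1 / b ^ 2)‖ < 1 := by
    refine Function.Periodic.norm_qParam_lt_one one_pos ?_
    rw [neg_div, one_div, neg_im, inv_im, neg_div, neg_neg]
    exact div_pos hb2 (normSq_pos.2 (pow_ne_zero 2 hb0))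
  have hzeta : zetaBar b = -I * b * qPochhammer (qParam 1 (b ^ 2)) (qParam 1 (b ^ 2)) /
      qPochhammer (qParam 1 (-1 / b ^ 2)) (qParam 1 (-1 / b ^ 2)) :=
    eq_div_of_mul_eq (qPochhammer_ne_zero hdual hdual) (zetaBar_mul_qPochhammer hb hb2)
  have hcancel (N₁ N₂ N₃ D₁ D₂ D₃ : ℂ) : b * (zetaBar b * N₁ / D₁) * (zetaBar b * N₂ / D₂) /
      (zetaBar b * N₃ / D₃) = b * zetaBar b * (N₁ * N₂ / N₃ * (D₃ / (D₁ * D₂))) := by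
    have hzeta0 : zetaBar b ≠ 0 := Complex.exp_ne_zero _
    field_simp
  have hmul : qParam 1 (z + w) = qParam 1 z * qParam 1 w := by
    simp only [qParam, mul_add, add_div, Complex.exp_add]
  rw [Gb_mul_self hb0, Gb_mul_self hb0, Gb_mul_self hb0, hcancel, hzeta, qPochhammerRatio,
    hmul, div_div_eq_mul_div]
  ring

lemma br_sq {r : ℝ} (hr : 0 ≤ r) : br r ^ 2 = r * I := by
  have hexp : exp (π * I / 4) ^ 2 = I := by
    rw [← Complex.exp_nat_mul]
    convert exp_pi_div_two_mul_I using 2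
    push_cast
    ring
  rw [br, mul_pow, hexp, ← ofReal_pow, Real.sq_sqrt hr, mul_comm]

lemma tendsto_br : Tendsto br (𝓝[>] 0) (𝓝 0) := by
  have h : Continuous br := by
    unfold br
    fun_prop
  simpa [br] using (h.tendsto 0).mono_left nhdsWithin_le_nhds

lemma br_re_pos {r : ℝ} (hr : 0 < r) : 0 < (br r).re := by
  have hexp : 0 < (exp (π * I / 4)).re := by
    rw [mul_div_right_comm, ← ofReal_ofNat, ← ofReal_div, exp_ofReal_mul_I_re,
      Real.cos_pi_div_four]
    positivity
  rw [br, re_mul_ofReal]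
  exact mul_pos hexp (Real.sqrt_pos.2 hr)

lemma qParam_br_sq_mul {r : ℝ} (hr : 0 ≤ r) (z : ℂ) :
    qParam 1 (br r ^ 2 * z) = (Real.exp (-(2 * π * r)) : ℂ) ^ z := by
  rw [cpow_def_of_ne_zero (ofReal_ne_zero.2 (Real.exp_ne_zero _)), ← ofReal_log
    (Real.exp_pos _).le, Real.log_exp, br_sq hr, qParam]
  congr 1
  push_cast
  linear_combination 2 * π * r * z * I_sq

lemma qParam_br_sq {r : ℝ} (hr : 0 ≤ r) : qParam 1 (br r ^ 2) = Real.exp (-(2 * π * r)) := by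
  simpa using qParam_br_sq_mul hr 1

lemma br_mul_Gb_mul_Gb_div_Gb {r : ℝ} (hr : 0 < r) (z w : ℂ) :
    br r * Gb (br r) (z * br r) * Gb (br r) (w * br r) / Gb (br r) ((z + w) * br r) =
      r / (1 - Real.exp (-(2 * π * r)) : ℝ) * qBeta (Real.exp (-(2 * π * r))) z w /
        qPochhammerRatio (qParam 1 z) (qParam 1 w) (qParam 1 (-1 / br r ^ 2)) := by
  have hsub : (1 - (Real.exp (-(2 * π * r)) : ℂ)) ≠ 0 :=
    sub_ne_zero.2 (ofReal_ne_one.2 (Real.exp_lt_one_iff.2 (by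
      rw [neg_lt_zero]; positivity)).ne).symm
  have hI : -I * br r ^ 2 = r := by
    rw [br_sq hr.le]
    linear_combination -r * I_sq
  rw [mul_Gb_mul_Gb_div_Gb (br_re_pos hr) (by simpa [br_sq hr.le] using hr)]
  simp only [qParam_br_sq hr.le, qParam_br_sq_mul hr.le, qBeta, hI, ofReal_sub, ofReal_one]
  field_simp

lemma tendsto_exp_neg_two_pi_mul :
    Tendsto (fun r : ℝ => Real.exp (-(2 * π * r))) (𝓝[>] 0) (𝓝[<] 1) := by
  refine tendsto_nhdsWithin_iff.2 ⟨?_, ?_⟩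
  · have h : Continuous fun r : ℝ => Real.exp (-(2 * π * r)) := by fun_prop
    simpa using (h.tendsto 0).mono_left nhdsWithin_le_nhds
  · filter_upwards [self_mem_nhdsWithin] with r (hr : 0 < r)
    exact Real.exp_lt_one_iff.2 (by rw [neg_lt_zero]; positivity)

lemma tendsto_div_one_sub_exp_neg_mul {c : ℝ} (hc : c ≠ 0) :
    Tendsto (fun r : ℝ => r / (1 - Real.exp (-(c * r)))) (𝓝[≠] 0) (𝓝 (1 / c)) := by
  have hderiv : HasDerivAt (fun r : ℝ => 1 - Real.exp (-(c * r))) c 0 := by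
    simpa using (((hasDerivAt_id (0 : ℝ)).const_mul c).neg.exp).const_sub 1
  refine (one_div c ▸ (hasDerivAt_iff_tendsto_slope.1 hderiv).inv₀ hc).congr fun r => ?_
  simp [slope_def_field]

lemma tendsto_qParam_neg_one_div_br_sq :
    Tendsto (fun r : ℝ => qParam 1 (-1 / br r ^ 2)) (𝓝[>] 0) (𝓝 0) := by
  have him : Tendsto (fun r : ℝ => (-1 / br r ^ 2).im) (𝓝[>] 0) atTop := by
    refine tendsto_inv_nhdsGT_zero.congr' ?_
    filter_upwards [self_mem_nhdsWithin] with r (hr : 0 < r)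
    simp [br_sq hr.le, neg_div]
  exact (Function.Periodic.qParam_tendsto one_pos).comp
    (tendsto_comap_iff.2 him) |>.mono_right nhdsWithin_le_nhds

theorem tendsto_br_mul_Gb_mul_Gb_div_Gb {z w : ℂ} (hz : ∀ n : ℕ, z ≠ -n) (hw : ∀ n : ℕ, w ≠ -n)
    (hzw : ∀ n : ℕ, z + w ≠ -n) :
    Tendsto (fun r : ℝ => br r * Gb (br r) (z * br r) * Gb (br r) (w * br r) /
        Gb (br r) ((z + w) * br r)) (𝓝[>] 0)
      (𝓝 (1 / (2 * π) * (Gamma z * Gamma w / Gamma (z + w)))) := by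
  have hpre : Tendsto (fun r : ℝ => (r : ℂ) / (1 - Real.exp (-(2 * π * r)) : ℝ)) (𝓝[>] 0)
      (𝓝 (1 / (2 * π))) := by
    have h := (tendsto_div_one_sub_exp_neg_mul Real.two_pi_pos.ne').mono_left
      (nhdsGT_le_nhdsNE 0)
    exact_mod_cast (continuous_ofReal.tendsto _).comp h
  have hlim := (hpre.mul ((tendsto_qBeta hz hw hzw).comp tendsto_exp_neg_two_pi_mul)).div
    ((tendsto_qPochhammerRatio_nhds_zero (qParam 1 z) (qParam 1 w)).comp
      tendsto_qParam_neg_one_div_br_sq) one_ne_zero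
  rw [div_one] at hlim
  refine hlim.congr' ?_
  filter_upwards [self_mem_nhdsWithin] with r hr using (br_mul_Gb_mul_Gb_div_Gb hr z w).symm

lemma ne_neg_natCast_of_im_ne_zero {z : ℂ} (hz : z.im ≠ 0) (n : ℕ) : z ≠ -n :=
  fun h => hz (by simp [h])

end QuantumDilogarithm

theorem stmt8_general (l t1 t2 : ℂ) (h1 : ∀ n : ℕ, I * (l - t1) ≠ -n)
    (h2 : ∀ n : ℕ, -(I * (l + t2)) ≠ -n) (h3 : ∀ n : ℕ, -(I * (t1 + t2)) ≠ -n) :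
    Tendsto
      (fun r : ℝ =>
        br r * exp ((Real.pi : ℂ) * I * br r ^ 2 * l * (l - 2 * t1)) *
            Gb (br r) (I * br r * (l - t1)) * Gb (br r) (-(I * br r * (l + t2))) /
          Gb (br r) (-(I * br r * (t1 + t2))))
      (𝓝[>] 0)
      (𝓝 (1 / (2 * (Real.pi : ℂ)) * Gamma (I * (l - t1)) * Gamma (-(I * (l + t2))) /
        Gamma (-(I * (t1 + t2))))) := by
  have hsum : I * (l - t1) + -(I * (l + t2)) = -(I * (t1 + t2)) := by ring
  have hexp : Tendsto (fun r : ℝ => exp (Real.pi * I * br r ^ 2 * l * (l - 2 * t1)))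
      (𝓝[>] 0) (𝓝 1) := by
    have h : Continuous fun b : ℂ => exp (Real.pi * I * b ^ 2 * l * (l - 2 * t1)) := by fun_prop
    simpa [Function.comp_def] using (h.tendsto 0).comp tendsto_br
  have hlim := hexp.mul
    (tendsto_br_mul_Gb_mul_Gb_div_Gb h1 h2 (by rwa [hsum]))
  rw [hsum] at hlim
  convert hlim using 2 with r
  · ring_nf
  · ring

/-- Classical limit of the rescaled quantum intertwining kernel
`b²·𝓕⌊bλ, bt; bt₁, bt₂⌋_*` (delta factor removed): for real `λ, t₁, t₂` with
`λ ≠ t₁`, `λ ≠ −t₂`, `t₁ + t₂ ≠ 0`,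
`lim_{r→0⁺} b(r) e^{πi b(r)² λ(λ−2t₁)} G_{b(r)}(ib(r)(λ−t₁)) G_{b(r)}(−ib(r)(λ+t₂)) / G_{b(r)}(−ib(r)(t₁+t₂))`
`= (1/2π) Γ(i(λ−t₁)) Γ(−i(λ+t₂)) / Γ(−i(t₁+t₂))`. -/
theorem stmt8 (l t1 t2 : ℝ) (h1 : l ≠ t1) (h2 : l ≠ -t2) (h3 : t1 + t2 ≠ 0) :
    Tendsto
      (fun r : ℝ =>
        br r * Complex.exp ((Real.pi : ℂ) * Complex.I * (br r) ^ 2 * l * (l - 2 * t1)) *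
            Gb (br r) (Complex.I * br r * ((l : ℂ) - t1)) *
            Gb (br r) (-(Complex.I * br r * ((l : ℂ) + t2))) /
          Gb (br r) (-(Complex.I * br r * ((t1 : ℂ) + t2))))
      (𝓝[>] (0 : ℝ))
      (𝓝 (1 / (2 * (Real.pi : ℂ)) * Complex.Gamma (Complex.I * ((l : ℂ) - t1)) *
          Complex.Gamma (-(Complex.I * ((l : ℂ) + t2))) /
          Complex.Gamma (-(Complex.I * ((t1 : ℂ) + t2))))) :=
  stmt8_general l t1 t2
    (ne_neg_natCast_of_im_ne_zero (by simpa [sub_eq_zero] using h1))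
    (ne_neg_natCast_of_im_ne_zero (by simpa [-neg_add_rev, ← eq_neg_iff_add_eq_zero] using h2))
    (ne_neg_natCast_of_im_ne_zero (by simpa [-neg_add_rev] using h3))
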